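/- For any Lagrangian subspaces L, M of V, the averaging formula F_{M,L}[f](h) = Σ_{m∈M} f((m,0)·h) defines a linear map F_{M,L} : ℂ(L\H, ψ) → ℂ(M\H, ψ) which commutes with the right-translation action of H; moreover, if L + M = V then F_{M,L} is an isomorphism. -/

import Mathlib

open scoped BigOperators
attribute [local instance] Classical.propDecidable

variable {k : Type} [Field k] [Fintype k]
variable {V : Type} [AddCommGroup V] [Module k V] [Fintype V]

/-- Multiplication of the Heisenberg group `H = V × k`:
`(v,z)·(v',z') = (v + v', z + z' + (1/2) ω(v,v'))`. -/
def hMul (ω : V →ₗ[k] V →ₗ[k] k) (x y : V × k) : V × k :=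
  (x.1 + y.1, x.2 + y.2 + (2 : k)⁻¹ * ω x.1 y.1)

/-- Inversion in the Heisenberg group. -/
def hInv (ω : V →ₗ[k] V →ₗ[k] k) (x : V × k) : V × k :=
  (-x.1, -x.2 + (2 : k)⁻¹ * ω x.1 x.1)

/-- Right translation `(π(h)f)(h') = f(h'·h)` of functions on the Heisenberg group. -/
def rt (ω : V →ₗ[k] V →ₗ[k] k) (h : V × k) (f : V × k → ℂ) : V × k → ℂ :=
  fun x => f (hMul ω x h)

/-- The model `ℂ(L\H, ψ)`: functions `f : H → ℂ` with `f((0,z)·(l,0)·h) = ψ(z)·f(h)`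
for `z ∈ k`, `l ∈ L`. -/
noncomputable def model (ω : V →ₗ[k] V →ₗ[k] k) (L : Submodule k V) (ψ : k → ℂ) :
    Submodule ℂ (V × k → ℂ) where
  carrier := {f | ∀ z : k, ∀ l ∈ L, ∀ h : V × k,
    f (hMul ω ((0 : V), z) (hMul ω (l, (0 : k)) h)) = ψ z * f h}
  add_mem' := by
    intro f g hf hg z l hl h
    simp only [Pi.add_apply, hf z l hl h, hg z l hl h]; ring
  zero_mem' := by intro z l hl h; simp
  smul_mem' := by
    intro c f hf z l hl h
    simp only [Pi.smul_apply, smul_eq_mul, hf z l hl h]; ring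

/-- The space `ℂ(M\H/L, ψ)`: functions `K : H → ℂ` with
`K((0,z)·(m,0)·h·(l,0)) = ψ(z)·K(h)` for `z ∈ k`, `m ∈ M`, `l ∈ L`. -/
noncomputable def biModel (ω : V →ₗ[k] V →ₗ[k] k) (M L : Submodule k V) (ψ : k → ℂ) :
    Submodule ℂ (V × k → ℂ) where
  carrier := {f | ∀ z : k, ∀ m ∈ M, ∀ l ∈ L, ∀ h : V × k,
    f (hMul ω (hMul ω (hMul ω ((0 : V), z) (m, (0 : k))) h) (l, (0 : k))) = ψ z * f h}
  add_mem' := by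
    intro f g hf hg z m hm l hl h
    simp only [Pi.add_apply, hf z m hm l hl h, hg z m hm l hl h]; ring
  zero_mem' := by intro z m hm l hl h; simp
  smul_mem' := by
    intro c f hf z m hm l hl h
    simp only [Pi.smul_apply, smul_eq_mul, hf z m hm l hl h]; ring

/-- The averaging operator `F_{M,L}[f](h) = ∑_{m ∈ M} f((m,0)·h)`. -/
noncomputable def avg (ω : V →ₗ[k] V →ₗ[k] k) (M : Submodule k V) :
    (V × k → ℂ) →ₗ[ℂ] (V × k → ℂ) where
  toFun f := fun h => ∑ m : M, f (hMul ω ((m : V), (0 : k)) h)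
  map_add' f g := by funext h; simp [Finset.sum_add_distrib]
  map_smul' c f := by funext h; simp [Finset.mul_sum]

/-- Normalized convolution on the Heisenberg group:
`(K ∗ f)(h) = q^{-(n+1)} ∑_{h' ∈ H} K(h')·f(h'⁻¹·h)`. -/
noncomputable def conv (ω : V →ₗ[k] V →ₗ[k] k) (n : ℕ) (K f : V × k → ℂ) : V × k → ℂ :=
  fun h => ((Fintype.card k : ℂ))⁻¹ ^ (n + 1) * ∑ x : V × k, K x * f (hMul ω (hInv ω x) h)

/-- The one-dimensional Gauss sum `G(ψ) = ∑_{z ∈ k} ψ(z²/2)`. -/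
noncomputable def gaussSum' (ψ : k → ℂ) : ℂ := ∑ z : k, ψ ((2 : k)⁻¹ * z ^ 2)

/-- The normalization coefficient `A_{M°,L°} = (G(ψ)/q)ⁿ · σ((−1)^{n(n−1)/2} ω_∧(o_L,o_M))`,
with the orientations presented by bases and `ω_∧(o_L,o_M) = det (ω(bL i, bM j))_{ij}`,
and `σ` the Legendre (quadratic) character. -/
noncomputable def Acoef (ω : V →ₗ[k] V →ₗ[k] k) (ψ : k → ℂ) (n : ℕ)
    {M L : Submodule k V} (bM : Module.Basis (Fin n) k M) (bL : Module.Basis (Fin n) k L) : ℂ :=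
  (gaussSum' ψ / (Fintype.card k : ℂ)) ^ n *
    ((quadraticChar k ((-1 : k) ^ (n * (n - 1) / 2) *
      (Matrix.of fun i j => ω ((bL i : V)) ((bM j : V))).det) : ℤ) : ℂ)

/-- The symplectic group `Sp(V)` of linear automorphisms of `V` preserving `ω`. -/
def Sp (ω : V →ₗ[k] V →ₗ[k] k) : Subgroup (V ≃ₗ[k] V) where
  carrier := {g | ∀ u v : V, ω (g u) (g v) = ω u v}
  one_mem' := by intro u v; rfl
  mul_mem' := by
    intro a b ha hb u v
    have h : ∀ x : V, (a * b) x = a (b x) := fun x => rfl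
    rw [h, h, ha, hb]
  inv_mem' := by
    intro a ha u v
    have h1 : a (a⁻¹ u) = u := a.apply_symm_apply u
    have h2 : a (a⁻¹ v) = v := a.apply_symm_apply v
    have := ha (a⁻¹ u) (a⁻¹ v)
    rw [h1, h2] at this
    exact this.symm

/-- A nontrivial (nowhere-vanishing) additive character `ψ : k → ℂ*`. -/
def IsAddChar (ψ : k → ℂ) : Prop :=
  (∀ a b : k, ψ (a + b) = ψ a * ψ b) ∧ (∀ a : k, ψ a ≠ 0) ∧ (∃ a : k, ψ a ≠ 1)

/-- `π` is a Heisenberg representation on `ℋ` with central character `ψ`: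
a representation of `H = V × k` by linear maps, with the center acting by `ψ`,
which is irreducible. -/
def IsHeisenbergRep (ω : V →ₗ[k] V →ₗ[k] k) (ψ : k → ℂ)
    {ℋ : Type} [AddCommGroup ℋ] [Module ℂ ℋ] (π : V × k → (ℋ →ₗ[ℂ] ℋ)) : Prop :=
  π ((0 : V), (0 : k)) = LinearMap.id ∧
  (∀ x y : V × k, π (hMul ω x y) = (π x).comp (π y)) ∧
  (∀ z : k, π ((0 : V), z) = ψ z • LinearMap.id) ∧
  (∀ W : Submodule ℂ ℋ, (∀ x : V × k, ∀ w ∈ W, π x w ∈ W) → W = ⊥ ∨ W = ⊤)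

/-- The action `g_*` of a symplectic automorphism on functions on `H`, `(g_* f)(h) = f(g⁻¹·h)`. -/
def gstar (g : V ≃ₗ[k] V) (f : V × k → ℂ) : V × k → ℂ :=
  fun x => f (g.symm x.1, x.2)

/-!
In `H` one has `(m,0)·(l,0) = (0,ω(m,l))·(l,0)·(m,0)`. Hence for `f` in `ℂ(L\H, ψ)`,
`F_{L,M}[F_{M,L}[f]](h) = ∑_{m ∈ M} (∑_{l ∈ L} ψ(ω(m,l))) f((m,0)·h)`. If `L + M = V`, an element
`m ≠ 0` of the isotropic subspace `M` pairs nontrivially with `L`, so its inner sum is a sum of a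
nontrivial character and vanishes: `F_{L,M} ∘ F_{M,L} = |L|`. Exchanging `L` and `M` gives
`F_{M,L} ∘ F_{L,M} = |M|`, so `F_{M,L}` is bijective.
-/

theorem sum_addChar_linearMap_eq_zero {F W R : Type*} [DivisionRing F] [AddCommGroup W]
    [Module F W] [Fintype W] [CommSemiring R] [IsDomain R] {χ : AddChar F R} (hχ : χ ≠ 0)
    {φ : W →ₗ[F] F} (hφ : φ ≠ 0) : ∑ w, χ (φ w) = 0 := by
  have comp_ne_zero : χ.compAddMonoidHom φ.toAddMonoidHom ≠ 0 := fun h ↦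
    hχ (AddChar.compAddMonoidHom_injective_left φ.toAddMonoidHom (LinearMap.surjective hφ) h)
  exact (AddChar.sum_eq_ite _).trans (if_neg comp_ne_zero)

theorem domRestrict_ne_zero_of_sup_eq_top {R U W : Type*} [CommSemiring R] [AddCommMonoid U]
    [Module R U] [AddCommMonoid W] [Module R W] {B : U →ₗ[R] U →ₗ[R] W}
    (hB : B.SeparatingLeft) {L M : Submodule R U} (hM : ∀ x ∈ M, ∀ y ∈ M, B x y = 0)
    (hLM : L ⊔ M = ⊤) {m : U} (hm : m ∈ M) (hm0 : m ≠ 0) : (B m).domRestrict L ≠ 0 := by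
  refine fun hL ↦ hm0 (hB m fun u ↦ ?_)
  obtain ⟨l, hl, m', hm', rfl⟩ := Submodule.mem_sup.mp (hLM ▸ Submodule.mem_top : u ∈ L ⊔ M)
  rw [map_add, hM m hm m' hm', add_zero]
  exact LinearMap.congr_fun hL ⟨l, hl⟩

section Heisenberg

omit [Fintype k] [Fintype V]

variable {ω : V →ₗ[k] V →ₗ[k] k} {L : Submodule k V} {ψ : k → ℂ} {f : V × k → ℂ}

theorem hMul_assoc (x y z : V × k) : hMul ω (hMul ω x y) z = hMul ω x (hMul ω y z) := by
  ext
  · exact add_assoc ..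
  · simp only [hMul, map_add, LinearMap.add_apply]
    ring

theorem zero_hMul (x : V × k) : hMul ω (0, 0) x = x := by
  simp [hMul]

theorem hMul_central_left_comm (x : V × k) (z : k) (y : V × k) :
    hMul ω x (hMul ω (0, z) y) = hMul ω (0, z) (hMul ω x y) := by
  ext
  · simp [hMul]
  · simp only [hMul, map_add, map_zero, LinearMap.zero_apply]
    ring

theorem hMul_vector_of_orthogonal {u v : V} (h : ω u v = 0) :
    hMul ω (u, 0) (v, 0) = (u + v, 0) := by
  simp [hMul, h]

theorem hMul_vector_swap (h2 : (2 : k) ≠ 0) (hω : ω.IsAlt) (u v : V) :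
    hMul ω (u, 0) (v, 0) = hMul ω (0, ω u v) (hMul ω (v, 0) (u, 0)) := by
  ext
  · simp [hMul, add_comm]
  · simp only [hMul, map_zero, LinearMap.zero_apply, ← hω.neg u v]
    field_simp
    ring

theorem apply_central_hMul (hf : f ∈ model ω L ψ) (z : k) (h : V × k) :
    f (hMul ω (0, z) h) = ψ z * f h := by
  simpa only [zero_hMul] using hf z 0 L.zero_mem h

/-- The additive character, in the sense of Mathlib, given by a function satisfying
`IsAddChar`. -/
def IsAddChar.toAddChar (hψ : IsAddChar ψ) : AddChar k ℂ where
  toFun := ψ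
  map_zero_eq_one' := by
    have h := hψ.1 0 0
    rw [add_zero] at h
    exact (mul_eq_left₀ (hψ.2.1 0)).mp h.symm
  map_add_eq_mul' := hψ.1

theorem IsAddChar.toAddChar_ne_zero (hψ : IsAddChar ψ) : hψ.toAddChar ≠ 0 :=
  AddChar.ne_zero_iff.mpr hψ.2.2

end Heisenberg

section Averaging

omit [Fintype k]

variable {ω : V →ₗ[k] V →ₗ[k] k} {L M : Submodule k V} {ψ : k → ℂ} {f : V × k → ℂ}

theorem avg_apply (f : V × k → ℂ) (h : V × k) :
    avg ω M f h = ∑ m : M, f (hMul ω ((m : V), 0) h) :=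
  rfl

theorem avg_mem_model (hM : ∀ x ∈ M, ∀ y ∈ M, ω x y = 0) (hf : f ∈ model ω L ψ) :
    avg ω M f ∈ model ω M ψ := by
  intro z m' hm' h
  rw [avg_apply, avg_apply, Finset.mul_sum]
  refine Fintype.sum_equiv (Equiv.addRight (⟨m', hm'⟩ : M)) _ _ fun m ↦ ?_
  rw [hMul_central_left_comm, apply_central_hMul hf, ← hMul_assoc,
    hMul_vector_of_orthogonal (hM m m.2 m' hm')]
  rfl

theorem avg_rt (f : V × k → ℂ) (h : V × k) : avg ω M (rt ω h f) = rt ω h (avg ω M f) := by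
  ext x
  simp only [avg_apply, rt, hMul_assoc]

theorem avg_avg_apply (h2 : (2 : k) ≠ 0) (hω : ω.IsAlt) (hf : f ∈ model ω L ψ) (h : V × k) :
    avg ω L (avg ω M f) h
      = ∑ m : M, (∑ l : L, ψ (ω m l)) * f (hMul ω ((m : V), 0) h) := by
  have swap_apply (l : L) (m : M) : f (hMul ω ((m : V), 0) (hMul ω ((l : V), 0) h))
      = ψ (ω m l) * f (hMul ω ((m : V), 0) h) := by
    rw [← hMul_assoc, hMul_vector_swap h2 hω, hMul_assoc, hMul_assoc, hf _ l l.2]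
  simp only [avg_apply, swap_apply, Finset.sum_mul]
  exact Finset.sum_comm

theorem avg_avg (h2 : (2 : k) ≠ 0) (hω : ω.IsAlt) (hsep : ω.SeparatingLeft)
    (hψ : IsAddChar ψ) (hM : ∀ x ∈ M, ∀ y ∈ M, ω x y = 0) (hLM : L ⊔ M = ⊤)
    (hf : f ∈ model ω L ψ) : avg ω L (avg ω M f) = (Fintype.card L : ℂ) • f := by
  have sum_eq_zero (m : M) (hm : m ≠ 0) : ∑ l : L, ψ (ω m l) = 0 :=
    sum_addChar_linearMap_eq_zero hψ.toAddChar_ne_zero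
      (domRestrict_ne_zero_of_sup_eq_top hsep hM hLM m.2 (Subtype.coe_ne_coe.mpr hm))
  have ψ_zero : ψ 0 = 1 := hψ.toAddChar.map_zero_eq_one
  ext h
  calc avg ω L (avg ω M f) h
      = ∑ m : M, (∑ l : L, ψ (ω m l)) * f (hMul ω ((m : V), 0) h) := avg_avg_apply h2 hω hf h
    _ = (∑ l : L, ψ (ω (0 : M) l)) * f (hMul ω (((0 : M) : V), 0) h) :=
        Fintype.sum_eq_single 0 fun m hm ↦ by rw [sum_eq_zero m hm, zero_mul]
    _ = Fintype.card L * f h := by simp [ψ_zero, zero_hMul]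

theorem eq_zero_of_avg_eq_zero (h2 : (2 : k) ≠ 0) (hω : ω.IsAlt) (hsep : ω.SeparatingLeft)
    (hψ : IsAddChar ψ) (hM : ∀ x ∈ M, ∀ y ∈ M, ω x y = 0) (hLM : L ⊔ M = ⊤)
    (hf : f ∈ model ω L ψ) (hf0 : avg ω M f = 0) : f = 0 := by
  have smul_eq_zero_of_avg : (Fintype.card L : ℂ) • f = 0 := by
    rw [← avg_avg h2 hω hsep hψ hM hLM hf, hf0, map_zero]
  exact (smul_eq_zero.mp smul_eq_zero_of_avg).resolve_left
    (Nat.cast_ne_zero.mpr Fintype.card_ne_zero)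

theorem exists_mem_model_avg_eq (h2 : (2 : k) ≠ 0) (hω : ω.IsAlt) (hsep : ω.SeparatingLeft)
    (hψ : IsAddChar ψ) (hL : ∀ x ∈ L, ∀ y ∈ L, ω x y = 0) (hLM : L ⊔ M = ⊤)
    {g : V × k → ℂ} (hg : g ∈ model ω M ψ) : ∃ f ∈ model ω L ψ, avg ω M f = g := by
  refine ⟨(Fintype.card M : ℂ)⁻¹ • avg ω L g, Submodule.smul_mem _ _ (avg_mem_model hL hg), ?_⟩
  rw [map_smul, avg_avg h2 hω hsep hψ hL (sup_comm L M ▸ hLM) hg,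
    inv_smul_smul₀ (Nat.cast_ne_zero.mpr Fintype.card_ne_zero)]

theorem averaging_operator_general (h2 : (2 : k) ≠ 0) (hω : ω.IsAlt) (hsep : ω.SeparatingLeft)
    (hψ : IsAddChar ψ) (hL : ∀ x ∈ L, ∀ y ∈ L, ω x y = 0)
    (hM : ∀ x ∈ M, ∀ y ∈ M, ω x y = 0) :
    (∀ f ∈ model ω L ψ, avg ω M f ∈ model ω M ψ) ∧
    (∀ f ∈ model ω L ψ, ∀ h : V × k, avg ω M (rt ω h f) = rt ω h (avg ω M f)) ∧
    (L ⊔ M = ⊤ →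
      (∀ f ∈ model ω L ψ, avg ω M f = 0 → f = 0) ∧
      (∀ g ∈ model ω M ψ, ∃ f ∈ model ω L ψ, avg ω M f = g)) :=
  ⟨fun _ ↦ avg_mem_model hM, fun f _ ↦ avg_rt f, fun hLM ↦
    ⟨fun _ ↦ eq_zero_of_avg_eq_zero h2 hω hsep hψ hM hLM,
      fun _ ↦ exists_mem_model_avg_eq h2 hω hsep hψ hL hLM⟩⟩

end Averaging

/-- the averaging formula `F_{M,L}[f](h) = ∑_{m ∈ M} f((m,0)·h)` defines a
linear map `ℂ(L\\H,ψ) → ℂ(M\\H,ψ)` commuting with right translation by `H`, which is an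
isomorphism when `L + M = V`. -/
theorem averaging_operator
    (ω : V →ₗ[k] V →ₗ[k] k) (n : ℕ)
    (hchar : ringChar k ≠ 2)
    (hdim : Module.finrank k V = 2 * n)
    (halt : ∀ v : V, ω v v = 0)
    (hnd : ∀ v : V, (∀ u : V, ω v u = 0) → v = 0)
    (ψ : k → ℂ) (hψ : IsAddChar ψ)
    (L M : Submodule k V)
    (hLiso : ∀ x ∈ L, ∀ y ∈ L, ω x y = 0) (hLrank : Module.finrank k L = n)
    (hMiso : ∀ x ∈ M, ∀ y ∈ M, ω x y = 0) (hMrank : Module.finrank k M = n) :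
    (∀ f ∈ model ω L ψ, avg ω M f ∈ model ω M ψ) ∧
    (∀ f ∈ model ω L ψ, ∀ h : V × k, avg ω M (rt ω h f) = rt ω h (avg ω M f)) ∧
    (L ⊔ M = ⊤ →
      (∀ f ∈ model ω L ψ, avg ω M f = 0 → f = 0) ∧
      (∀ g ∈ model ω M ψ, ∃ f ∈ model ω L ψ, avg ω M f = g)) :=
  averaging_operator_general (Ring.two_ne_zero hchar) halt hnd hψ hLiso hMiso
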